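/- Let p ∈ (0, 1] with p < 2α. For every ε with 0 < ε ≤ (2α − p)/2 there exists N₀ such that for all N ≥ N₀ and all n ≥ 0, E[ θ_n^p ] ≤ (1 + 4p/(2α − p)) · n · (δ_N / log₂ N)^{p/(2α + ε)}; in particular E[ ((𝒴_N(n) − R^{N,m_N}(n))₊)^p ] satisfies the same bound, where x₊ = max(x,0). -/

import Mathlib

open MeasureTheory ProbabilityTheory Real Filter Set

noncomputable section

/-- One step of the `N`-BRW: each of the `N` particles branches into two, the children jump
according to `jump`, and only the `N` right-most particles are kept; the result is the
sorted (ascending) vector of the `N` retained positions. -/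
def brwStep (N : ℕ) (pos : Fin N → ℝ) (jump : Fin N → Fin 2 → ℝ) : Fin N → ℝ := fun i =>
  (((Finset.univ : Finset (Fin N × Fin 2)).val.map fun p => pos p.1 + jump p.1 p.2).sort
      (· ≤ ·)).getD (N + i) 0

/-- The `N`-BRW started from the sorted configuration `x0`, driven by the jumps `jump`:
`brw N x0 jump n i` is the position `X_{i+1}(n)` of the `(i+1)`-th lowest particle at time `n`. -/
def brw (N : ℕ) (x0 : Fin N → ℝ) (jump : ℕ → Fin N → Fin 2 → ℝ) : ℕ → Fin N → ℝ
  | 0 => x0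
  | n + 1 => brwStep N (brw N x0 jump n) (jump n)

/-- Position `X_N(n)` of the right-most particle of the `N`-BRW started at the origin. -/
def brwMax (N : ℕ) (jump : ℕ → Fin N → Fin 2 → ℝ) (n : ℕ) : ℝ :=
  ⨆ i, brw N (fun _ => 0) jump n i

/-- Position `X_1(n)` of the left-most particle of the `N`-BRW started at the origin. -/
def brwMin (N : ℕ) (jump : ℕ → Fin N → Fin 2 → ℝ) (n : ℕ) : ℝ :=
  ⨅ i, brw N (fun _ => 0) jump n i

/-- The `(N,ℓ)`-discretised stairs process driven by the jumps `Y`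
(with the convention `R(k) = 0` for `k ≤ 0`, realised via truncated subtraction). -/
def dsp (N ℓ : ℕ) (Y : ℕ → Fin N → Fin 2 → ℝ) : ℕ → ℝ
  | 0 => 0
  | n + 1 => max (dsp N ℓ Y n) (dsp N ℓ Y (n - ℓ) + ⨆ p : Fin N × Fin 2, Y n p.1 p.2)

/-- The tail `P(X > x) = 1/h(x)` of the random variable `X` under `P`. -/
def tail {Ω : Type*} [MeasurableSpace Ω] (P : Measure Ω) (X : Ω → ℝ) (x : ℝ) : ℝ :=
  (P {ω | x < X ω}).toReal

/-- Generalized inverse `h⁻¹(y)` of `h(x) = 1 / P(X > x)`. -/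
def hinv {Ω : Type*} [MeasurableSpace Ω] (P : Measure Ω) (X : Ω → ℝ) (y : ℝ) : ℝ :=
  sInf {x : ℝ | 0 ≤ x ∧ tail P X x ≤ y⁻¹}

/-- The scaling sequence `c_N = h⁻¹(2 N log₂ N)`. -/
def cN {Ω : Type*} [MeasurableSpace Ω] (P : Measure Ω) (X : Ω → ℝ) (N : ℕ) : ℝ :=
  hinv P X (2 * N * Real.logb 2 N)

/-- `θ^{(m)}_n = max_{0 ≤ k ≤ n} (𝒴_N(k) − R^{N,m}(k))`. -/
def theta (N m : ℕ) (Y : ℕ → Fin N → Fin 2 → ℝ) (n : ℕ) : ℝ :=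
  (Finset.range (n + 1)).sup' Finset.nonempty_range_add_one fun k => brwMax N Y k - dsp N m Y k

/-!
For `x ≥ 0`, the step from `n` to `n + 1` increases `θ` by more than `x` only if some particle
alive at time `n` leads the record of `m` steps earlier by more than `x` and then makes a jump
larger than `x`: the stairs process copies every jump made from that old record, and `θ` already
accounts for the gap between the two processes at earlier times.

By the many-to-one formula, the expected number of particles with such a lead is at most
`N * 2 ^ m * P(S > x)`, where `S` is a sum of `m` independent jumps. The event `S > x` forces one
jump above `x / 2` or two jumps above `x / (2 * m)`. Multiplied by the probability of the final
jump, this bounds the tail of an increment of `θ` by essentially `N * 2 ^ m * m * P(X > x) ^ 2`,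
which is quadratic in the tail of `X`. Potter bounds then show that beyond
`x₀ = (δ_N / log₂ N) ^ (1 / γ)`, with `γ` slightly larger than `2α`, this is at most
`(x / x₀) ^ (-q)` for any `q < 2α`. Choosing `q > p` gives a `p`-th moment of order `x₀ ^ p`, and
since `p ≤ 1` the map `t ↦ t ^ p` is subadditive, so the `n` increments can be summed.
-/

/-! ### Selection step and gap process -/

section BRWStep

lemma lt_getElem_iff_of_pairwise_le {α : Type*} [LinearOrder α] {L : List α}
    (hL : L.Pairwise (· ≤ ·)) (y : α) {k : ℕ} (hk : k < L.length) :
    y < L[k] ↔ L.length ≤ k + L.countP (y < ·) := by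
  have mono : ∀ {i j : ℕ} (hi : i < L.length) (hj : j < L.length), i ≤ j → L[i] ≤ L[j] := by
    intro i j hi hj hij
    rcases hij.eq_or_lt with rfl | hlt
    · rfl
    · exact List.pairwise_iff_getElem.1 hL i j hi hj hlt
  constructor
  · intro hy
    have above : (L.drop k).countP (y < ·) = (L.drop k).length := by
      refine List.countP_eq_length.2 fun a ha => ?_
      obtain ⟨i, hi, rfl⟩ := List.mem_drop_iff_getElem.1 ha
      exact decide_eq_true (hy.trans_le (mono hk _ (Nat.le_add_right k i)))
    have := (List.drop_sublist k L).countP_le (p := (y < ·))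
    rw [above, List.length_drop] at this
    omega
  · contrapose!
    intro hy
    have below : (L.take (k + 1)).countP (y < ·) = 0 := by
      refine List.countP_eq_zero.2 fun a ha => ?_
      obtain ⟨i, hi, rfl⟩ := List.mem_take_iff_getElem.1 ha
      simpa using (mono (by omega) hk (by omega)).trans hy
    have split : L.countP (y < ·) = (L.drop (k + 1)).countP (y < ·) := by
      conv_lhs => rw [← List.take_append_drop (k + 1) L, List.countP_append, below, zero_add]
    have := (L.drop (k + 1)).countP_le_length (p := (y < ·))
    rw [List.length_drop] at this
    omega

/-- The positions of the `2N` children of the particles at `pos`, before selection. -/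
def brwChildren (N : ℕ) (pos : Fin N → ℝ) (jump : Fin N → Fin 2 → ℝ) : Multiset ℝ :=
  (Finset.univ : Finset (Fin N × Fin 2)).val.map fun q => pos q.1 + jump q.1 q.2

variable (N : ℕ) (pos : Fin N → ℝ) (jump : Fin N → Fin 2 → ℝ)

lemma length_sort_brwChildren : ((brwChildren N pos jump).sort (· ≤ ·)).length = N * 2 := by
  simp [brwChildren]

lemma brwStep_eq_getElem (i : Fin N) :
    brwStep N pos jump i = ((brwChildren N pos jump).sort (· ≤ ·))[N + i]'(by
      rw [length_sort_brwChildren]; omega) :=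
  List.getD_eq_getElem _ _ _

lemma ofFn_brwStep :
    List.ofFn (brwStep N pos jump) = ((brwChildren N pos jump).sort (· ≤ ·)).drop N := by
  refine List.ext_getElem ?_ fun k _ _ => ?_
  · rw [List.length_ofFn, List.length_drop, length_sort_brwChildren]
    omega
  · rw [List.getElem_ofFn, List.getElem_drop, brwStep_eq_getElem]

lemma exists_brwStep_eq (i : Fin N) :
    ∃ i' j, brwStep N pos jump i = pos i' + jump i' j := by
  have mem : brwStep N pos jump i ∈ brwChildren N pos jump := by
    rw [← Multiset.mem_sort (r := (· ≤ ·)), brwStep_eq_getElem]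
    exact List.getElem_mem _
  obtain ⟨q, _, hq⟩ := Multiset.mem_map.1 mem
  exact ⟨q.1, q.2, hq.symm⟩

lemma sum_brwStep_le (f : ℝ → ENNReal) :
    ∑ i, f (brwStep N pos jump i) ≤ ∑ i, ∑ j, f (pos i + jump i j) := by
  set L := (brwChildren N pos jump).sort (· ≤ ·) with L_def
  calc ∑ i, f (brwStep N pos jump i)
      = ((L.drop N).map f).sum := by
        rw [L_def, ← ofFn_brwStep, List.map_ofFn, List.sum_ofFn]; rfl
    _ ≤ (L.map f).sum := ((List.drop_sublist N L).map f).sum_le_sum fun _ _ => zero_le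
    _ = ((brwChildren N pos jump).map f).sum := by
        rw [← Multiset.sum_coe, ← Multiset.map_coe, L_def, Multiset.sort_eq]
    _ = ∑ i, ∑ j, f (pos i + jump i j) := by
        rw [brwChildren, Multiset.map_map, ← Fintype.sum_prod_type']; rfl

lemma lt_brwStep_iff (i : Fin N) (y : ℝ) :
    y < brwStep N pos jump i ↔
      N * 2 ≤ N + i + ∑ q : Fin N × Fin 2, if y < pos q.1 + jump q.1 q.2 then 1 else 0 := by
  rw [brwStep_eq_getElem, lt_getElem_iff_of_pairwise_le (Multiset.pairwise_sort _ _),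
    length_sort_brwChildren, ← Multiset.coe_countP, Multiset.sort_eq, brwChildren,
    Multiset.countP_map, ← Finset.filter_val, Finset.card_val, Finset.card_filter]

end BRWStep

section Theta

variable (N m : ℕ) (Y : ℕ → Fin N → Fin 2 → ℝ)

lemma theta_zero : theta N m Y 0 = 0 := by
  simp [theta, brwMax, brw, dsp]

lemma theta_succ (n : ℕ) :
    theta N m Y (n + 1) = max (theta N m Y n) (brwMax N Y (n + 1) - dsp N m Y (n + 1)) := by
  simp only [theta, Finset.range_add_one (n := n + 1),
    Finset.sup'_insert Finset.nonempty_range_add_one, max_comm]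

lemma monotone_theta : Monotone (theta N m Y) :=
  monotone_nat_of_le_succ fun n => (theta_succ N m Y n).symm ▸ le_max_left _ _

lemma theta_nonneg (n : ℕ) : 0 ≤ theta N m Y n :=
  (theta_zero N m Y).symm.trans_le (monotone_theta N m Y n.zero_le)

lemma brwMax_sub_dsp_le_theta {k n : ℕ} (h : k ≤ n) :
    brwMax N Y k - dsp N m Y k ≤ theta N m Y n :=
  Finset.le_sup' (fun k => brwMax N Y k - dsp N m Y k) (Finset.mem_range.2 (by omega))

/-- The lead at time `n` of particle `i` over the right-most particle of time `s`. -/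
def brwLead (s n : ℕ) (i : Fin N) : ℝ :=
  brw N (fun _ => 0) Y n i - brwMax N Y s

lemma exists_brwMax_succ_eq [NeZero N] (n : ℕ) :
    ∃ i j, brwMax N Y (n + 1) = brw N (fun _ => 0) Y n i + Y n i j := by
  obtain ⟨i, hi⟩ := exists_eq_ciSup_of_finite (f := brw N (fun _ => 0) Y (n + 1))
  rw [brwMax, ← hi]
  exact exists_brwStep_eq N _ _ i

lemma brw_le_brwMax (n : ℕ) (i : Fin N) : brw N (fun _ => 0) Y n i ≤ brwMax N Y n :=
  le_ciSup (finite_range _).bddAbove i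

lemma dsp_add_le_dsp_succ (n : ℕ) (i : Fin N) (j : Fin 2) :
    dsp N m Y (n - m) + Y n i j ≤ dsp N m Y (n + 1) := by
  rw [dsp.eq_def N m Y (n + 1)]
  refine (add_le_add_right ?_ _).trans (le_max_right _ _)
  exact le_ciSup (f := fun q : Fin N × Fin 2 => Y n q.1 q.2) (finite_range _).bddAbove (i, j)

lemma exists_jump_of_lt_theta_sub [NeZero N] {n : ℕ} {x : ℝ} (hx : 0 ≤ x)
    (h : x < theta N m Y (n + 1) - theta N m Y n) :
    ∃ i j, x < brwLead N Y (n - m) n i ∧ x < Y n i j := by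
  obtain ⟨i, j, max_eq⟩ := exists_brwMax_succ_eq N Y n
  have record : theta N m Y n + x < brwMax N Y (n + 1) - dsp N m Y (n + 1) := by
    rw [theta_succ, lt_sub_iff_add_lt', lt_max_iff] at h
    exact h.resolve_left (by linarith)
  have delayed := dsp_add_le_dsp_succ N m Y n i j
  have delayed_gap := brwMax_sub_dsp_le_theta N m Y (Nat.sub_le n m)
  have dsp_mono : dsp N m Y n ≤ dsp N m Y (n + 1) := by rw [dsp]; exact le_max_left _ _
  have gap := brwMax_sub_dsp_le_theta N m Y (le_refl n)
  have le_max := brw_le_brwMax N Y n i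
  refine ⟨i, j, ?_, ?_⟩
  · rw [brwLead]
    linarith
  · linarith

end Theta

section Measurability

variable {Ω : Type*} [MeasurableSpace Ω] {N : ℕ}

lemma measurable_brwStep {pos : Ω → Fin N → ℝ} {jump : Ω → Fin N → Fin 2 → ℝ}
    (hpos : ∀ i, Measurable fun ω => pos ω i) (hjump : ∀ i j, Measurable fun ω => jump ω i j)
    (i : Fin N) : Measurable fun ω => brwStep N (pos ω) (jump ω) i := by
  refine measurable_of_Ioi fun y => ?_
  simp only [preimage, mem_Ioi, lt_brwStep_iff]
  refine measurableSet_le measurable_const (measurable_const.add ?_)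
  refine Finset.measurable_sum _ fun q _ => Measurable.ite ?_ measurable_const measurable_const
  exact measurableSet_lt measurable_const ((hpos q.1).add (hjump q.1 q.2))

variable {Y : Ω → ℕ → Fin N → Fin 2 → ℝ}

lemma measurable_brw (x0 : Fin N → ℝ) {n : ℕ}
    (hY : ∀ k < n, ∀ i j, Measurable fun ω => Y ω k i j) (i : Fin N) :
    Measurable fun ω => brw N x0 (Y ω) n i := by
  induction n generalizing i with
  | zero => exact measurable_const
  | succ n ih =>
    exact measurable_brwStep (ih fun k hk => hY k (by omega)) (hY n (Nat.lt_succ_self n)) i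

lemma measurable_brwMax {n : ℕ} (hY : ∀ k < n, ∀ i j, Measurable fun ω => Y ω k i j) :
    Measurable fun ω => brwMax N (Y ω) n :=
  Measurable.iSup (measurable_brw _ hY)

lemma measurable_dsp (m : ℕ) (hY : ∀ k i j, Measurable fun ω => Y ω k i j) (n : ℕ) :
    Measurable fun ω => dsp N m (Y ω) n := by
  induction n using Nat.strong_induction_on with
  | _ n ih =>
    cases n with
    | zero => simp only [dsp, measurable_const]
    | succ n =>
      simp only [dsp]
      exact (ih n (by omega)).max
        ((ih (n - m) (by omega)).add (Measurable.iSup fun q => hY n q.1 q.2))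

lemma measurable_theta (m : ℕ) (hY : ∀ k i j, Measurable fun ω => Y ω k i j) (n : ℕ) :
    Measurable fun ω => theta N m (Y ω) n := by
  induction n with
  | zero => simp only [theta_zero, measurable_const]
  | succ n ih =>
    simp only [theta_succ]
    exact ih.max ((measurable_brwMax fun k _ => hY k).sub (measurable_dsp m hY _))

end Measurability

/-! ### Many-to-one formula -/

section Past

variable {Ω : Type*} {N : ℕ} {Y : Ω → ℕ → Fin N → Fin 2 → ℝ}

/-- The σ-algebra generated by the jumps performed strictly before time `n`. -/
abbrev jumpsBefore (Y : Ω → ℕ → Fin N → Fin 2 → ℝ) (n : ℕ) : MeasurableSpace Ω :=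
  ⨆ q ∈ {q : ℕ × Fin N × Fin 2 | q.1 < n},
    MeasurableSpace.comap (fun ω => Y ω q.1 q.2.1 q.2.2) inferInstance

lemma measurable_jumpsBefore {k n : ℕ} (hk : k < n) (i : Fin N) (j : Fin 2) :
    Measurable[jumpsBefore Y n] fun ω => Y ω k i j := by
  rw [measurable_iff_comap_le]
  exact le_biSup (fun q : ℕ × Fin N × Fin 2 =>
    MeasurableSpace.comap (fun ω => Y ω q.1 q.2.1 q.2.2) inferInstance)
    (show (k, i, j) ∈ {q : ℕ × Fin N × Fin 2 | q.1 < n} from hk)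

lemma measurable_brwLead_jumpsBefore {s n : ℕ} (hs : s ≤ n) (i : Fin N) :
    Measurable[jumpsBefore Y n] fun ω => brwLead N (Y ω) s n i :=
  let _ := jumpsBefore Y n
  (measurable_brw _ (fun _ hk => measurable_jumpsBefore hk) i).sub
    (measurable_brwMax fun _ hk => measurable_jumpsBefore (hk.trans_le hs))

end Past

section Jumps

variable {Ω : Type*} [MeasurableSpace Ω] {P : Measure Ω} {N : ℕ}
  {Y : Ω → ℕ → Fin N → Fin 2 → ℝ} {ν : Measure ℝ}

lemma lintegral_comp_add_of_indepFun [IsFiniteMeasure P] {A B : Ω → ℝ} (hA : Measurable A)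
    (hB : Measurable B) (hAB : IndepFun A B P) {f : ℝ → ENNReal} (hf : Measurable f) :
    ∫⁻ ω, f (A ω + B ω) ∂P = ∫⁻ ω, ∫⁻ y, f (A ω + y) ∂(P.map B) ∂P := by
  have := Measure.isFiniteMeasure_map P B
  have inner_meas : Measurable fun x => ∫⁻ y, f (x + y) ∂(P.map B) :=
    (hf.comp (measurable_fst.add measurable_snd)).lintegral_prod_right'
  calc ∫⁻ ω, f (A ω + B ω) ∂P = ∫⁻ x, f x ∂(P.map (A + B)) := (lintegral_map hf (hA.add hB)).symm
    _ = ∫⁻ ω, ∫⁻ y, f (A ω + y) ∂(P.map B) ∂P := by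
        rw [hAB.map_add_eq_map_conv_map hA hB, Measure.lintegral_conv hf,
          lintegral_map inner_meas hA]

/-- The jumps driving an `N`-BRW are independent with common law `ν`. -/
structure IsIIDJumps (P : Measure Ω) (Y : Ω → ℕ → Fin N → Fin 2 → ℝ) (ν : Measure ℝ) :
    Prop where
  measurable : ∀ n i j, Measurable fun ω => Y ω n i j
  iIndepFun : iIndepFun (fun (q : ℕ × Fin N × Fin 2) ω => Y ω q.1 q.2.1 q.2.2) P
  map_eq : ∀ n i j, P.map (fun ω => Y ω n i j) = ν

namespace IsIIDJumps

lemma measurable_brwLead (hY : IsIIDJumps P Y ν) (s n : ℕ) (i : Fin N) :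
    Measurable fun ω => brwLead N (Y ω) s n i :=
  (measurable_brw _ (fun k _ => hY.measurable k) i).sub
    (measurable_brwMax fun k _ => hY.measurable k)

lemma tail_eq (hY : IsIIDJumps P Y ν) (n : ℕ) (i : Fin N) (j : Fin 2) (x : ℝ) :
    tail P (fun ω => Y ω n i j) x = ν.real (Ioi x) := by
  rw [← hY.map_eq n i j, map_measureReal_apply (hY.measurable n i j) measurableSet_Ioi]
  rfl

lemma indepFun_of_jumpsBefore (hY : IsIIDJumps P Y ν) {n : ℕ} {A : Ω → ℝ}
    (hA : Measurable[jumpsBefore Y n] A) (i : Fin N) (j : Fin 2) :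
    IndepFun A (fun ω => Y ω n i j) P := by
  have disj : Disjoint {q : ℕ × Fin N × Fin 2 | q.1 < n} {(n, i, j)} := by simp
  have indep := indep_iSup_of_disjoint (fun q => (hY.measurable q.1 q.2.1 q.2.2).comap_le)
    hY.iIndepFun.iIndep disj
  rw [iSup_singleton] at indep
  exact (IndepFun_iff_Indep _ _ _).2 (indep_of_indep_of_le_left indep hA.comap_le)

variable [IsProbabilityMeasure P]

lemma isProbabilityMeasure (hY : IsIIDJumps P Y ν) (i : Fin N) : IsProbabilityMeasure ν :=
  hY.map_eq 0 i 0 ▸ Measure.isProbabilityMeasure_map (hY.measurable 0 i 0).aemeasurable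

lemma lintegral_sum_brwLead_succ_le (hY : IsIIDJumps P Y ν) {s n : ℕ} (hs : s ≤ n)
    {f : ℝ → ENNReal} (hf : Measurable f) :
    ∫⁻ ω, ∑ i, f (brwLead N (Y ω) s (n + 1) i) ∂P ≤
      2 * ∫⁻ ω, ∑ i, ∫⁻ y, f (brwLead N (Y ω) s n i + y) ∂ν ∂P := by
  have jump_law (i : Fin N) (j : Fin 2) : ∫⁻ ω, f (brwLead N (Y ω) s n i + Y ω n i j) ∂P =
      ∫⁻ ω, ∫⁻ y, f (brwLead N (Y ω) s n i + y) ∂ν ∂P := by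
    rw [lintegral_comp_add_of_indepFun (hY.measurable_brwLead s n i) (hY.measurable n i j)
      (hY.indepFun_of_jumpsBefore (measurable_brwLead_jumpsBefore hs i) i j) hf, hY.map_eq]
  have child_meas (i : Fin N) (j : Fin 2) :
      Measurable fun ω => f (brwLead N (Y ω) s n i + Y ω n i j) :=
    hf.comp ((hY.measurable_brwLead s n i).add (hY.measurable n i j))
  have averaged_meas (i : Fin N) :
      Measurable fun ω => ∫⁻ y, f (brwLead N (Y ω) s n i + y) ∂ν := by
    have := hY.isProbabilityMeasure i
    exact (hf.comp (((hY.measurable_brwLead s n i).comp measurable_fst).add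
      measurable_snd)).lintegral_prod_right'
  calc ∫⁻ ω, ∑ i, f (brwLead N (Y ω) s (n + 1) i) ∂P
      ≤ ∫⁻ ω, ∑ i, ∑ j, f (brwLead N (Y ω) s n i + Y ω n i j) ∂P := by
        refine lintegral_mono fun ω => ?_
        simp only [brwLead, sub_add_eq_add_sub]
        exact sum_brwStep_le N _ (Y ω n) fun x => f (x - brwMax N (Y ω) s)
    _ = ∑ i, 2 * ∫⁻ ω, ∫⁻ y, f (brwLead N (Y ω) s n i + y) ∂ν ∂P := by
        rw [lintegral_finsetSum _ fun i _ => Finset.measurable_sum _ fun j _ => child_meas i j]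
        refine Finset.sum_congr rfl fun i _ => ?_
        rw [lintegral_finsetSum _ fun j _ => child_meas i j, Fin.sum_univ_two, jump_law,
          jump_law, two_mul]
    _ = 2 * ∫⁻ ω, ∑ i, ∫⁻ y, f (brwLead N (Y ω) s n i + y) ∂ν ∂P := by
        rw [← Finset.mul_sum, lintegral_finsetSum _ fun i _ => averaged_meas i]

lemma lintegral_sum_brwLead_le (hY : IsIIDJumps P Y ν) (s k : ℕ) (i₀ : Fin N) (j₀ : Fin 2)
    {f : ℝ → ENNReal} (hf : Monotone f) :
    ∫⁻ ω, ∑ i, f (brwLead N (Y ω) s (s + k) i) ∂P ≤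
      N * 2 ^ k * ∫⁻ ω, f (∑ l ∈ Finset.range k, Y ω l i₀ j₀) ∂P := by
  induction k generalizing f with
  | zero =>
    have lead_nonpos (ω : Ω) (i : Fin N) : f (brwLead N (Y ω) s s i) ≤ f 0 :=
      hf (sub_nonpos.2 (brw_le_brwMax N (Y ω) s i))
    calc ∫⁻ ω, ∑ i, f (brwLead N (Y ω) s s i) ∂P ≤ ∫⁻ _, ∑ _ : Fin N, f 0 ∂P :=
          lintegral_mono fun ω => Finset.sum_le_sum fun i _ => lead_nonpos ω i
      _ = N * 2 ^ 0 * ∫⁻ ω, f (∑ l ∈ Finset.range 0, Y ω l i₀ j₀) ∂P := by simp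
  | succ k ih =>
    have averaged_mono : Monotone fun x => ∫⁻ y, f (x + y) ∂ν :=
      fun a b hab => lintegral_mono fun y => hf (add_le_add_left hab y)
    have sum_meas : Measurable[jumpsBefore Y k] fun ω => ∑ l ∈ Finset.range k, Y ω l i₀ j₀ :=
      Finset.measurable_sum _ fun l hl => measurable_jumpsBefore (Finset.mem_range.1 hl) i₀ j₀
    calc ∫⁻ ω, ∑ i, f (brwLead N (Y ω) s (s + k + 1) i) ∂P
        ≤ 2 * ∫⁻ ω, ∑ i, ∫⁻ y, f (brwLead N (Y ω) s (s + k) i + y) ∂ν ∂P :=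
          hY.lintegral_sum_brwLead_succ_le (Nat.le_add_right s k) hf.measurable
      _ ≤ 2 * (N * 2 ^ k * ∫⁻ ω, ∫⁻ y, f (∑ l ∈ Finset.range k, Y ω l i₀ j₀ + y) ∂ν ∂P) := by
          gcongr
          exact ih averaged_mono
      _ = N * 2 ^ (k + 1) * ∫⁻ ω, f (∑ l ∈ Finset.range (k + 1), Y ω l i₀ j₀) ∂P := by
          simp only [Finset.sum_range_succ]
          rw [lintegral_comp_add_of_indepFun
            (Finset.measurable_sum _ fun l _ => hY.measurable l i₀ j₀) (hY.measurable k i₀ j₀)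
            (hY.indepFun_of_jumpsBefore sum_meas i₀ j₀) hf.measurable, hY.map_eq]
          ring

lemma sum_tail_brwLead_le (hY : IsIIDJumps P Y ν) (s k : ℕ) (i₀ : Fin N) (j₀ : Fin 2) (x : ℝ) :
    ∑ i, tail P (fun ω => brwLead N (Y ω) s (s + k) i) x ≤
      N * 2 ^ k * tail P (fun ω => ∑ l ∈ Finset.range k, Y ω l i₀ j₀) x := by
  have indicator_mono : Monotone ((Ioi x).indicator (1 : ℝ → ENNReal)) := by
    intro a b hab
    by_cases ha : x < a
    · simp [ha, ha.trans_le hab]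
    · simp [ha]
  have lintegral_eq {Z : Ω → ℝ} (hZ : Measurable Z) :
      ∫⁻ ω, (Ioi x).indicator (1 : ℝ → ENNReal) (Z ω) ∂P = P {ω | x < Z ω} :=
    lintegral_indicator_one (hZ measurableSet_Ioi)
  have bound := hY.lintegral_sum_brwLead_le s k i₀ j₀ indicator_mono
  have meas (i : Fin N) :
      Measurable fun ω => (Ioi x).indicator (1 : ℝ → ENNReal) (brwLead N (Y ω) s (s + k) i) :=
    indicator_mono.measurable.comp (hY.measurable_brwLead s (s + k) i)
  simp only [lintegral_finsetSum _ fun i _ => meas i, lintegral_eq (hY.measurable_brwLead _ _ _),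
    lintegral_eq (Finset.measurable_sum _ fun l _ => hY.measurable l i₀ j₀)] at bound
  have finite : (N * 2 ^ k * P {ω | x < ∑ l ∈ Finset.range k, Y ω l i₀ j₀} : ENNReal) ≠ ⊤ := by
    finiteness
  simpa [tail, ENNReal.toReal_sum, ENNReal.toReal_mul] using ENNReal.toReal_mono finite bound

end IsIIDJumps

end Jumps

/-! ### One big jump -/

section BigJumps

lemma sum_le_half {ι : Type*} {s : Finset ι} {a : ι → ℝ} {m : ℕ} (hm : 0 < m)
    (hs : s.card ≤ m) {x : ℝ} (hx : 0 ≤ x) (ha : ∀ i ∈ s, a i ≤ x / (2 * m)) :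
    ∑ i ∈ s, a i ≤ x / 2 := by
  calc ∑ i ∈ s, a i ≤ s.card • (x / (2 * m)) := Finset.sum_le_card_nsmul s a _ ha
    _ ≤ m • (x / (2 * m)) := by gcongr
    _ = x / 2 := by
        rw [nsmul_eq_mul]
        field_simp

lemma exists_big_or_two_moderate_of_lt_sum {ι : Type*} {s : Finset ι}
    {a : ι → ℝ} {m : ℕ} (hm : 0 < m) (hs : s.card ≤ m) {x : ℝ} (hx : 0 ≤ x)
    (h : x < ∑ i ∈ s, a i) :
    (∃ i ∈ s, x / 2 < a i) ∨ ∃ q ∈ s.offDiag, x / (2 * m) < a q.1 ∧ x / (2 * m) < a q.2 := by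
  classical
  by_contra! hcon
  obtain ⟨not_big, not_two⟩ := hcon
  by_cases hi : ∃ i ∈ s, x / (2 * m) < a i
  · obtain ⟨i, his, hi⟩ := hi
    have others : ∑ k ∈ s.erase i, a k ≤ x / 2 :=
      sum_le_half hm ((Finset.card_erase_le).trans hs) hx fun k hk =>
        not_two (i, k) (Finset.mem_offDiag.2
          ⟨his, Finset.mem_of_mem_erase hk, (Finset.ne_of_mem_erase hk).symm⟩) hi
    rw [← Finset.add_sum_erase _ _ his] at h
    linarith [not_big i his]
  · push Not at hi
    linarith [sum_le_half hm hs hx hi]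

lemma measureReal_lt_and_lt_eq_mul_tail {Ω : Type*} [MeasurableSpace Ω] {P : Measure Ω}
    {A B : Ω → ℝ} (h : IndepFun A B P) (x y : ℝ) :
    P.real {ω | x < A ω ∧ y < B ω} = tail P A x * tail P B y := by
  rw [tail, tail, ← ENNReal.toReal_mul]
  exact congrArg ENNReal.toReal
    (h.measure_inter_preimage_eq_mul (Ioi x) (Ioi y) measurableSet_Ioi measurableSet_Ioi)

lemma tail_sum_le {Ω ι : Type*} [MeasurableSpace Ω] {P : Measure Ω} [IsFiniteMeasure P]
    {Z : ι → Ω → ℝ} (hZ : Pairwise fun i k => IndepFun (Z i) (Z k) P) {ν : Measure ℝ}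
    (hν : ∀ i x, tail P (Z i) x = ν.real (Ioi x)) {s : Finset ι} {m : ℕ} (hm : 0 < m)
    (hs : s.card ≤ m) {x : ℝ} (hx : 0 ≤ x) :
    tail P (fun ω => ∑ i ∈ s, Z i ω) x ≤
      m * ν.real (Ioi (x / 2)) + (m * ν.real (Ioi (x / (2 * m)))) ^ 2 := by
  have one_big : P.real (⋃ i ∈ s, {ω | x / 2 < Z i ω}) ≤ m * ν.real (Ioi (x / 2)) := by
    calc P.real (⋃ i ∈ s, {ω | x / 2 < Z i ω})
        ≤ ∑ i ∈ s, P.real {ω | x / 2 < Z i ω} := measureReal_biUnion_finset_le s _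
      _ = s.card • ν.real (Ioi (x / 2)) := Finset.sum_eq_card_nsmul fun i _ => hν i _
      _ ≤ m * ν.real (Ioi (x / 2)) := by
          rw [nsmul_eq_mul]
          gcongr
  have pair_prob (q : ι × ι) (hq : q ∈ s.offDiag) :
      P.real {ω | x / (2 * m) < Z q.1 ω ∧ x / (2 * m) < Z q.2 ω} =
        ν.real (Ioi (x / (2 * m))) ^ 2 := by
    rw [measureReal_lt_and_lt_eq_mul_tail (hZ (Finset.mem_offDiag.1 hq).2.2), hν, hν, sq]
  have two_moderate :
      P.real (⋃ q ∈ s.offDiag, {ω | x / (2 * m) < Z q.1 ω ∧ x / (2 * m) < Z q.2 ω}) ≤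
        (m * ν.real (Ioi (x / (2 * m)))) ^ 2 := by
    have card_le : (s.offDiag.card : ℝ) ≤ m ^ 2 := by
      rw [Finset.offDiag_card, ← sq]
      exact_mod_cast (Nat.sub_le _ _).trans (Nat.pow_le_pow_left hs 2)
    calc _ ≤ ∑ q ∈ s.offDiag, P.real {ω | x / (2 * m) < Z q.1 ω ∧ x / (2 * m) < Z q.2 ω} :=
          measureReal_biUnion_finset_le _ _
      _ = s.offDiag.card • ν.real (Ioi (x / (2 * m))) ^ 2 := Finset.sum_eq_card_nsmul pair_prob
      _ ≤ (m * ν.real (Ioi (x / (2 * m)))) ^ 2 := by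
          rw [nsmul_eq_mul, mul_pow]
          gcongr
  refine (measureReal_mono fun ω hω => ?_).trans
    ((measureReal_union_le _ _).trans (add_le_add one_big two_moderate))
  simpa only [mem_union, mem_iUnion₂, exists_prop, mem_ofPred_eq] using
    exists_big_or_two_moderate_of_lt_sum hm hs hx hω

/-- The bound given by the many-to-one formula and the one-big-jump principle for the probability
that `theta N m` increases by more than `x` in one step, for jumps whose tail is `T`. -/
def incrTailBound (N m : ℕ) (T : ℝ → ℝ) (x : ℝ) : ℝ :=
  2 * (N * 2 ^ m) * (m * T (x / 2) + (m * T (x / (2 * m))) ^ 2) * T x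

namespace IsIIDJumps

variable {Ω : Type*} [MeasurableSpace Ω] {P : Measure Ω} [IsProbabilityMeasure P] {N : ℕ} [NeZero N]
  {Y : Ω → ℕ → Fin N → Fin 2 → ℝ} {ν : Measure ℝ} {m : ℕ} {x : ℝ}

lemma sum_tail_brwLead_sub_le (hY : IsIIDJumps P Y ν) (hm : 0 < m) (n : ℕ) (hx : 0 ≤ x) :
    ∑ i, tail P (fun ω => brwLead N (Y ω) (n - m) n i) x ≤
      N * 2 ^ m * (m * ν.real (Ioi (x / 2)) + (m * ν.real (Ioi (x / (2 * m)))) ^ 2) := by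
  obtain ⟨k, hk, hkm⟩ : ∃ k, n - m + k = n ∧ k ≤ m := ⟨n - (n - m), by omega, by omega⟩
  have tail_sum : tail P (fun ω => ∑ l ∈ Finset.range k, Y ω l 0 0) x ≤
      m * ν.real (Ioi (x / 2)) + (m * ν.real (Ioi (x / (2 * m)))) ^ 2 :=
    tail_sum_le (fun l l' hne => hY.iIndepFun.indepFun (i := (l, 0, 0)) (j := (l', 0, 0))
      (by simpa using hne)) (fun l y => hY.tail_eq l 0 0 y) hm (by simpa using hkm) hx
  have many_to_one := hY.sum_tail_brwLead_le (n - m) k 0 0 x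
  rw [hk] at many_to_one
  refine many_to_one.trans ?_
  gcongr
  · exact ENNReal.toReal_nonneg
  · norm_num

lemma tail_theta_sub_le (hY : IsIIDJumps P Y ν) (hm : 0 < m) (n : ℕ) (hx : 0 ≤ x) :
    tail P (fun ω => theta N m (Y ω) (n + 1) - theta N m (Y ω) n) x ≤
      incrTailBound N m (fun y => ν.real (Ioi y)) x := by
  have leader_jumps (i : Fin N) (j : Fin 2) :
      P.real {ω | x < brwLead N (Y ω) (n - m) n i ∧ x < Y ω n i j} =
        tail P (fun ω => brwLead N (Y ω) (n - m) n i) x * ν.real (Ioi x) := by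
    have indep :=
      hY.indepFun_of_jumpsBefore (measurable_brwLead_jumpsBefore (n.sub_le m) i) i j
    rw [measureReal_lt_and_lt_eq_mul_tail indep, hY.tail_eq]
  calc tail P (fun ω => theta N m (Y ω) (n + 1) - theta N m (Y ω) n) x
      ≤ P.real (⋃ i, ⋃ j, {ω | x < brwLead N (Y ω) (n - m) n i ∧ x < Y ω n i j}) := by
        refine measureReal_mono fun ω hω => ?_
        simpa only [mem_iUnion, mem_ofPred_eq] using exists_jump_of_lt_theta_sub N m (Y ω) hx hω
    _ ≤ ∑ i, ∑ j, P.real {ω | x < brwLead N (Y ω) (n - m) n i ∧ x < Y ω n i j} :=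
        (measureReal_iUnion_fintype_le _).trans
          (Finset.sum_le_sum fun i _ => measureReal_iUnion_fintype_le _)
    _ = 2 * (∑ i, tail P (fun ω => brwLead N (Y ω) (n - m) n i) x) * ν.real (Ioi x) := by
        simp only [leader_jumps, Fin.sum_univ_two, ← two_mul, ← Finset.mul_sum, ← Finset.sum_mul]
        ring
    _ ≤ incrTailBound N m (fun y => ν.real (Ioi y)) x := by
        rw [incrTailBound, mul_assoc 2 (N * 2 ^ m : ℝ)]
        gcongr
        exact hY.sum_tail_brwLead_sub_le hm n hx

end IsIIDJumps

end BigJumps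

/-! ### Moments -/

section Moments

lemma lintegral_rpow_Ioc {p x₀ : ℝ} (hp : 0 < p) (hx₀ : 0 ≤ x₀) :
    ∫⁻ t in Ioc 0 x₀, ENNReal.ofReal (t ^ (p - 1)) = ENNReal.ofReal (x₀ ^ p / p) := by
  have integrable : IntegrableOn (fun t : ℝ => t ^ (p - 1)) (Ioc 0 x₀) :=
    (intervalIntegrable_iff_integrableOn_Ioc_of_le hx₀).1
      (intervalIntegral.intervalIntegrable_rpow' (by linarith))
  have nonneg : 0 ≤ᵐ[volume.restrict (Ioc 0 x₀)] fun t : ℝ => t ^ (p - 1) := by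
    filter_upwards [ae_restrict_mem measurableSet_Ioc] with t ht
    exact rpow_nonneg ht.1.le _
  rw [← ofReal_integral_eq_lintegral_ofReal integrable nonneg,
    ← intervalIntegral.integral_of_le hx₀, integral_rpow (Or.inl (by linarith)), sub_add_cancel,
    zero_rpow hp.ne', sub_zero]

lemma lintegral_rpow_Ioi {r x₀ : ℝ} (hr : 0 < r) (hx₀ : 0 < x₀) :
    ∫⁻ t in Ioi x₀, ENNReal.ofReal (t ^ (-r - 1)) = ENNReal.ofReal (x₀ ^ (-r) / r) := by
  have nonneg : 0 ≤ᵐ[volume.restrict (Ioi x₀)] fun t : ℝ => t ^ (-r - 1) := by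
    filter_upwards [ae_restrict_mem measurableSet_Ioi] with t ht
    exact rpow_nonneg (hx₀.trans ht).le _
  rw [← ofReal_integral_eq_lintegral_ofReal (integrableOn_Ioi_rpow_of_lt (by linarith) hx₀) nonneg,
    integral_Ioi_rpow_of_lt (by linarith) hx₀, sub_add_cancel, neg_div_neg_eq]

variable {Ω : Type*} [MeasurableSpace Ω] {P : Measure Ω}

lemma lintegral_rpow_le_of_tail_le [IsProbabilityMeasure P] {D : Ω → ℝ} (hD : Measurable D)
    (hD0 : ∀ ω, 0 ≤ D ω) {p q x₀ : ℝ} (hp : 0 < p) (hpq : p < q) (hx₀ : 0 < x₀)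
    (htail : ∀ x, x₀ ≤ x → tail P D x ≤ (x / x₀) ^ (-q)) :
    ∫⁻ ω, ENNReal.ofReal (D ω ^ p) ∂P ≤ ENNReal.ofReal ((1 + p / (q - p)) * x₀ ^ p) := by
  have hqp : 0 < q - p := sub_pos.2 hpq
  have below : ∫⁻ t in Ioc 0 x₀, P {ω | t < D ω} * ENNReal.ofReal (t ^ (p - 1)) ≤
      ENNReal.ofReal (x₀ ^ p / p) := by
    rw [← lintegral_rpow_Ioc hp hx₀.le]
    exact lintegral_mono fun t => mul_le_of_le_one_left' prob_le_one
  have above : ∫⁻ t in Ioi x₀, P {ω | t < D ω} * ENNReal.ofReal (t ^ (p - 1)) ≤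
      ENNReal.ofReal (x₀ ^ p / (q - p)) := by
    calc ∫⁻ t in Ioi x₀, P {ω | t < D ω} * ENNReal.ofReal (t ^ (p - 1))
        ≤ ∫⁻ t in Ioi x₀, ENNReal.ofReal (x₀ ^ q) * ENNReal.ofReal (t ^ (-(q - p) - 1)) := by
          refine setLIntegral_mono' measurableSet_Ioi fun t (ht : x₀ < t) => ?_
          have ht0 : 0 < t := hx₀.trans ht
          have : (t / x₀) ^ (-q) * t ^ (p - 1) = x₀ ^ q * t ^ (-(q - p) - 1) := by
            rw [div_rpow ht0.le hx₀.le, rpow_neg hx₀.le, div_inv_eq_mul, mul_right_comm,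
              ← rpow_add ht0, mul_comm]
            ring_nf
          rw [← ofReal_measureReal (measure_ne_top P _), ← ENNReal.ofReal_mul measureReal_nonneg,
            ← ENNReal.ofReal_mul (by positivity), ← this]
          gcongr
          exact htail t ht.le
      _ = ENNReal.ofReal (x₀ ^ p / (q - p)) := by
          rw [lintegral_const_mul _ (by fun_prop), lintegral_rpow_Ioi hqp hx₀,
            ← ENNReal.ofReal_mul (by positivity), ← mul_div_assoc, ← rpow_add hx₀]
          ring_nf
  calc ∫⁻ ω, ENNReal.ofReal (D ω ^ p) ∂P
      = ENNReal.ofReal p *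
          ∫⁻ t in Ioi 0, P {ω | t < D ω} * ENNReal.ofReal (t ^ (p - 1)) :=
        lintegral_rpow_eq_lintegral_meas_lt_mul P (Eventually.of_forall hD0) hD.aemeasurable hp
    _ ≤ ENNReal.ofReal p * (ENNReal.ofReal (x₀ ^ p / p) + ENNReal.ofReal (x₀ ^ p / (q - p))) := by
        rw [← Ioc_union_Ioi_eq_Ioi hx₀.le]
        gcongr
        exact (lintegral_union_le _ _ _).trans (add_le_add below above)
    _ = ENNReal.ofReal ((1 + p / (q - p)) * x₀ ^ p) := by
        rw [← ENNReal.ofReal_add (by positivity) (by positivity), ← ENNReal.ofReal_mul hp.le]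
        congr 1
        field_simp

lemma lintegral_rpow_le_of_increments {Z : ℕ → Ω → ℝ} (hZ : ∀ n, Measurable (Z n))
    (hmono : ∀ ω, Monotone fun n => Z n ω) (hZ0 : ∀ ω, Z 0 ω = 0) {p : ℝ} (hp0 : 0 < p)
    (hp1 : p ≤ 1) {K : ENNReal}
    (hK : ∀ n, ∫⁻ ω, ENNReal.ofReal ((Z (n + 1) ω - Z n ω) ^ p) ∂P ≤ K) (n : ℕ) :
    ∫⁻ ω, ENNReal.ofReal (Z n ω ^ p) ∂P ≤ n * K := by
  induction n with
  | zero => simp [hZ0, zero_rpow hp0.ne']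
  | succ n ih =>
    have subadditive (ω : Ω) : ENNReal.ofReal (Z (n + 1) ω ^ p) ≤
        ENNReal.ofReal (Z n ω ^ p) + ENNReal.ofReal ((Z (n + 1) ω - Z n ω) ^ p) := by
      have h0 : 0 ≤ Z n ω := (hZ0 ω).symm.trans_le (hmono ω n.zero_le)
      have h1 : 0 ≤ Z (n + 1) ω - Z n ω := sub_nonneg.2 (hmono ω n.le_succ)
      rw [← ENNReal.ofReal_add (by positivity) (by positivity)]
      gcongr
      simpa only [add_sub_cancel] using rpow_add_le_add_rpow h0 h1 hp0.le hp1
    calc ∫⁻ ω, ENNReal.ofReal (Z (n + 1) ω ^ p) ∂P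
        ≤ ∫⁻ ω, ENNReal.ofReal (Z n ω ^ p) ∂P +
            ∫⁻ ω, ENNReal.ofReal ((Z (n + 1) ω - Z n ω) ^ p) ∂P := by
          rw [← lintegral_add_left ((hZ n).pow_const p).ennreal_ofReal]
          exact lintegral_mono subadditive
      _ ≤ n * K + K := add_le_add ih (hK n)
      _ = (n + 1 : ℕ) * K := by
          rw [Nat.cast_succ, add_one_mul]

lemma integrable_and_integral_le_of_lintegral_ofReal_le {g : Ω → ℝ} (hg : Measurable g)
    (hg0 : ∀ ω, 0 ≤ g ω) {c : ℝ} (hc : 0 ≤ c)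
    (h : ∫⁻ ω, ENNReal.ofReal (g ω) ∂P ≤ ENNReal.ofReal c) :
    Integrable g P ∧ ∫ ω, g ω ∂P ≤ c := by
  have nonneg : 0 ≤ᵐ[P] g := Eventually.of_forall hg0
  refine ⟨⟨hg.aestronglyMeasurable, (hasFiniteIntegral_iff_ofReal nonneg).2
    (h.trans_lt ENNReal.ofReal_lt_top)⟩, ?_⟩
  rw [integral_eq_lintegral_of_nonneg_ae nonneg hg.aestronglyMeasurable]
  exact ENNReal.toReal_le_of_le_ofReal hc h

variable {N : ℕ} {Y : Ω → ℕ → Fin N → Fin 2 → ℝ}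

lemma integral_rpow_posPart_le_integral_rpow_theta {m n : ℕ} {p : ℝ} (hp : 0 < p)
    (hint : Integrable (fun ω => theta N m (Y ω) n ^ p) P) :
    ∫ ω, max (brwMax N (Y ω) n - dsp N m (Y ω) n) 0 ^ p ∂P ≤ ∫ ω, theta N m (Y ω) n ^ p ∂P := by
  refine integral_mono_of_nonneg (Eventually.of_forall fun ω => by positivity) hint
    (Eventually.of_forall fun ω => ?_)
  exact rpow_le_rpow (le_max_right _ _)
    (max_le (brwMax_sub_dsp_le_theta N m (Y ω) le_rfl) (theta_nonneg N m (Y ω) n)) hp.le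

lemma IsIIDJumps.integral_rpow_theta_le [IsProbabilityMeasure P] [NeZero N] {ν : Measure ℝ}
    (hY : IsIIDJumps P Y ν) {m : ℕ} (hm : 0 < m) {p q x₀ : ℝ} (hp0 : 0 < p)
    (hp1 : p ≤ 1) (hpq : p < q) (hx₀ : 0 < x₀)
    (hbound : ∀ x, x₀ ≤ x → incrTailBound N m (fun y => ν.real (Ioi y)) x ≤ (x / x₀) ^ (-q))
    (n : ℕ) :
    Integrable (fun ω => theta N m (Y ω) n ^ p) P ∧
      ∫ ω, theta N m (Y ω) n ^ p ∂P ≤ (1 + p / (q - p)) * n * x₀ ^ p := by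
  have : 0 < q - p := sub_pos.2 hpq
  have theta_meas := measurable_theta m hY.measurable
  have increments (n : ℕ) := lintegral_rpow_le_of_tail_le
    ((theta_meas (n + 1)).sub (theta_meas n))
    (fun ω => sub_nonneg.2 (monotone_theta N m (Y ω) n.le_succ)) hp0 hpq hx₀ fun x hx =>
      (hY.tail_theta_sub_le hm n (hx₀.le.trans hx)).trans (hbound x hx)
  have moment := lintegral_rpow_le_of_increments theta_meas (fun ω => monotone_theta N m (Y ω))
    (fun ω => theta_zero N m (Y ω)) hp0 hp1 increments n
  refine integrable_and_integral_le_of_lintegral_ofReal_le ((theta_meas n).pow_const p)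
    (fun ω => rpow_nonneg (theta_nonneg N m (Y ω) n) p) (by positivity) (moment.trans_eq ?_)
  rw [← ENNReal.ofReal_natCast, ← ENNReal.ofReal_mul n.cast_nonneg]
  ring_nf

end Moments

/-! ### Potter bounds -/

/-- A positive antitone function `T` that decays by a factor between `2 ^ β₁` and `2 ^ β₂` whenever
its argument, at least `t₀`, doubles. Iterating the two inequalities gives Potter-type bounds on
`T (l * a) / T a`. -/
structure DoublingBounds (T : ℝ → ℝ) (β₁ β₂ t₀ : ℝ) : Prop where
  antitone : Antitone T
  pos : ∀ x, 0 < T x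
  threshold_pos : 0 < t₀
  exponent_pos : 0 < β₁
  two_rpow_mul_le : ∀ a, t₀ ≤ a → 2 ^ β₁ * T (2 * a) ≤ T a
  le_two_rpow_mul : ∀ a, t₀ ≤ a → T a ≤ 2 ^ β₂ * T (2 * a)

lemma exists_doublingBounds {T : ℝ → ℝ} (hT : Antitone T) (hT0 : ∀ x, 0 ≤ T x) {α β₁ β₂ : ℝ}
    (hβ₁ : 0 < β₁) (hβ₁α : β₁ < α) (hαβ₂ : α < β₂)
    (hdouble : Tendsto (fun x => T x / T (2 * x)) atTop (nhds (2 ^ α))) :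
    ∃ t₀, DoublingBounds T β₁ β₂ t₀ := by
  have lower := hdouble.eventually_const_lt (rpow_lt_rpow_of_exponent_lt one_lt_two hβ₁α)
  have upper := hdouble.eventually_lt_const (rpow_lt_rpow_of_exponent_lt one_lt_two hαβ₂)
  obtain ⟨t₁, ht₁⟩ := eventually_atTop.1 (lower.and upper)
  have pos_two_mul (a : ℝ) (ha : t₁ ≤ a) : 0 < T (2 * a) := by
    refine (hT0 _).lt_of_ne fun h => ?_
    have ratio_pos := (rpow_pos_of_pos two_pos β₁).trans (ht₁ a ha).1
    rw [← h, div_zero] at ratio_pos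
    exact ratio_pos.false
  refine ⟨max t₁ 1, hT, fun x => ?_, by positivity, hβ₁, fun a ha => ?_, fun a ha => ?_⟩
  · refine (pos_two_mul (max t₁ (x / 2)) (le_max_left _ _)).trans_le (hT ?_)
    linarith [le_max_right t₁ (x / 2)]
  · have h := le_of_max_le_left ha
    exact ((lt_div_iff₀ (pos_two_mul a h)).1 (ht₁ a h).1).le
  · have h := le_of_max_le_left ha
    exact ((div_lt_iff₀ (pos_two_mul a h)).1 (ht₁ a h).2).le

namespace DoublingBounds

variable {T : ℝ → ℝ} {β₁ β₂ t₀ a l : ℝ}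

lemma exponent_le (h : DoublingBounds T β₁ β₂ t₀) : β₁ ≤ β₂ := by
  rw [← rpow_le_rpow_left_iff one_lt_two, ← mul_le_mul_iff_left₀ (h.pos (2 * t₀))]
  exact (h.two_rpow_mul_le t₀ le_rfl).trans (h.le_two_rpow_mul t₀ le_rfl)

lemma upper_exponent_pos (h : DoublingBounds T β₁ β₂ t₀) : 0 < β₂ :=
  h.exponent_pos.trans_le h.exponent_le

lemma le_two_pow_mul (h : DoublingBounds T β₁ β₂ t₀) (ha : t₀ ≤ a) (k : ℕ) : t₀ ≤ 2 ^ k * a :=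
  ha.trans (le_mul_of_one_le_left (h.threshold_pos.trans_le ha).le (one_le_pow₀ one_le_two))

lemma two_pow_rpow_mul_le (h : DoublingBounds T β₁ β₂ t₀) (ha : t₀ ≤ a) (k : ℕ) :
    ((2 : ℝ) ^ k) ^ β₁ * T (2 ^ k * a) ≤ T a := by
  induction k with
  | zero => simp
  | succ k ih =>
    calc ((2 : ℝ) ^ (k + 1)) ^ β₁ * T (2 ^ (k + 1) * a)
        = (2 ^ k) ^ β₁ * (2 ^ β₁ * T (2 * (2 ^ k * a))) := by
          rw [pow_succ', mul_rpow zero_le_two (by positivity), mul_assoc 2, mul_assoc,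
            mul_left_comm]
      _ ≤ (2 ^ k) ^ β₁ * T (2 ^ k * a) := by
          gcongr
          exact h.two_rpow_mul_le _ (h.le_two_pow_mul ha k)
      _ ≤ T a := ih

lemma le_two_pow_rpow_mul (h : DoublingBounds T β₁ β₂ t₀) (ha : t₀ ≤ a) (k : ℕ) :
    T a ≤ ((2 : ℝ) ^ k) ^ β₂ * T (2 ^ k * a) := by
  induction k with
  | zero => simp
  | succ k ih =>
    calc T a ≤ ((2 : ℝ) ^ k) ^ β₂ * T (2 ^ k * a) := ih
      _ ≤ (2 ^ k) ^ β₂ * (2 ^ β₂ * T (2 * (2 ^ k * a))) := by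
          gcongr
          exact h.le_two_rpow_mul _ (h.le_two_pow_mul ha k)
      _ = (2 ^ (k + 1)) ^ β₂ * T (2 ^ (k + 1) * a) := by
          rw [pow_succ', mul_rpow zero_le_two (by positivity), mul_assoc 2, mul_assoc,
            mul_left_comm]

lemma apply_mul_le (h : DoublingBounds T β₁ β₂ t₀) (ha : t₀ ≤ a) (hl : 1 ≤ l) :
    T (l * a) ≤ (l / 2) ^ (-β₁) * T a := by
  have := h.threshold_pos.trans_le ha
  obtain ⟨k, hkl, hlk⟩ := exists_nat_pow_near hl (one_lt_two (α := ℝ))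
  have half_le : l / 2 ≤ 2 ^ k := by linarith [pow_succ (2 : ℝ) k]
  rw [rpow_neg (by positivity), inv_mul_eq_div, le_div_iff₀' (by positivity)]
  calc (l / 2) ^ β₁ * T (l * a) ≤ (2 ^ k) ^ β₁ * T (2 ^ k * a) :=
        mul_le_mul (rpow_le_rpow (by positivity) half_le h.exponent_pos.le)
          (h.antitone (by gcongr)) (h.pos _).le (by positivity)
    _ ≤ T a := h.two_pow_rpow_mul_le ha k

lemma apply_le_mul (h : DoublingBounds T β₁ β₂ t₀) (ha : t₀ ≤ a) (hl : 1 ≤ l) :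
    T a ≤ (2 * l) ^ β₂ * T (l * a) := by
  have := h.threshold_pos.trans_le ha
  obtain ⟨k, hkl, hlk⟩ := exists_nat_pow_near hl (one_lt_two (α := ℝ))
  have le_double : (2 : ℝ) ^ (k + 1) ≤ 2 * l := by linarith [pow_succ (2 : ℝ) k]
  calc T a ≤ (2 ^ (k + 1)) ^ β₂ * T (2 ^ (k + 1) * a) := h.le_two_pow_rpow_mul ha (k + 1)
    _ ≤ (2 * l) ^ β₂ * T (l * a) :=
        mul_le_mul (rpow_le_rpow (by positivity) le_double h.upper_exponent_pos.le)
          (h.antitone (by gcongr)) (h.pos _).le (by positivity)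

lemma tendsto_zero (h : DoublingBounds T β₁ β₂ t₀) : Tendsto T atTop (nhds 0) := by
  have bound : Tendsto (fun x => (x / t₀ / 2) ^ (-β₁) * T t₀) atTop (nhds 0) := by
    simpa only [zero_mul, Function.comp_def, id] using ((tendsto_rpow_neg_atTop h.exponent_pos).comp
      ((tendsto_id.atTop_div_const h.threshold_pos).atTop_div_const two_pos)).mul_const (T t₀)
  refine squeeze_zero' (Eventually.of_forall fun x => (h.pos x).le) ?_ bound
  filter_upwards [eventually_ge_atTop t₀] with x hx
  simpa only [div_mul_cancel₀ x h.threshold_pos.ne', id] using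
    h.apply_mul_le le_rfl ((one_le_div h.threshold_pos).2 hx)

lemma tendsto_mul_apply_rpow (h : DoublingBounds T β₁ β₂ t₀) {b : ℝ} (hb : 0 < b)
    (hbβ₂ : b * β₂ < 1) : Tendsto (fun y => y * T (y ^ b)) atTop atTop := by
  have ht₀ := h.threshold_pos
  refine tendsto_atTop_mono' _ ?_ ((tendsto_rpow_atTop (sub_pos.2 hbβ₂)).const_mul_atTop
    (mul_pos (h.pos t₀) (rpow_pos_of_pos (div_pos ht₀ two_pos) β₂)))
  filter_upwards [(tendsto_rpow_atTop hb).eventually_ge_atTop t₀, eventually_gt_atTop 0]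
    with y hy hy0
  have potter := h.apply_le_mul le_rfl ((one_le_div ht₀).2 hy)
  rw [div_mul_cancel₀ _ ht₀.ne'] at potter
  have scale : (2 * (y ^ b / t₀)) ^ β₂ = y ^ (b * β₂) / (t₀ / 2) ^ β₂ := by
    rw [rpow_mul hy0.le, ← div_rpow (by positivity) (by positivity)]
    congr 1
    field_simp
  rw [scale, div_mul_eq_mul_div, le_div_iff₀ (by positivity)] at potter
  calc T t₀ * (t₀ / 2) ^ β₂ * y ^ (1 - b * β₂)
      ≤ y ^ (b * β₂) * T (y ^ b) * y ^ (1 - b * β₂) := by gcongr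
    _ = y * T (y ^ b) := by
        rw [mul_right_comm, ← rpow_add hy0, add_sub_cancel, rpow_one]

end DoublingBounds

section Quantile

variable {Ω : Type*} [MeasurableSpace Ω] {P : Measure Ω} {X : Ω → ℝ} {β₁ β₂ t₀ b : ℝ}

lemma antitone_tail [IsFiniteMeasure P] : Antitone (tail P X) := fun _ _ hab =>
  measureReal_mono fun _ hω => hab.trans_lt hω

namespace DoublingBounds

lemma nonempty_tail_le_inv (h : DoublingBounds (tail P X) β₁ β₂ t₀) {y : ℝ} (hy : 0 < y) :
    {x | 0 ≤ x ∧ tail P X x ≤ y⁻¹}.Nonempty :=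
  ((eventually_ge_atTop 0).and (h.tendsto_zero.eventually_le_const (inv_pos.2 hy))).exists

lemma eventually_rpow_le_hinv (h : DoublingBounds (tail P X) β₁ β₂ t₀) (hb : 0 < b)
    (hbβ₂ : b * β₂ < 1) : ∀ᶠ y in atTop, y ^ b ≤ hinv P X y := by
  filter_upwards [(h.tendsto_mul_apply_rpow hb hbβ₂).eventually_gt_atTop 1, eventually_gt_atTop 0]
    with y hy hy0
  refine le_csInf (h.nonempty_tail_le_inv hy0) fun x hx => le_of_not_gt fun hlt => ?_
  exact ((h.antitone hlt.le).trans hx.2).not_gt ((inv_lt_iff_one_lt_mul₀' hy0).2 hy)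

lemma tendsto_hinv (h : DoublingBounds (tail P X) β₁ β₂ t₀) : Tendsto (hinv P X) atTop atTop := by
  have hβ₂ := h.upper_exponent_pos
  have hb : 0 < 1 / (2 * β₂) := by positivity
  exact tendsto_atTop_mono' _ (h.eventually_rpow_le_hinv hb (by field_simp; norm_num))
    (tendsto_rpow_atTop hb)

lemma eventually_tail_hinv_le (h : DoublingBounds (tail P X) β₁ β₂ t₀) :
    ∀ᶠ y in atTop, tail P X (hinv P X y) ≤ 2 ^ β₂ * y⁻¹ := by
  filter_upwards [h.tendsto_hinv.eventually_ge_atTop t₀, eventually_gt_atTop 0] with y hy hy0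
  obtain ⟨x, hx, hxy⟩ := exists_lt_of_csInf_lt (h.nonempty_tail_le_inv hy0)
    (lt_mul_of_one_lt_left (h.threshold_pos.trans_le hy) one_lt_two)
  calc tail P X (hinv P X y) ≤ 2 ^ β₂ * tail P X (2 * hinv P X y) := h.le_two_rpow_mul _ hy
    _ ≤ 2 ^ β₂ * y⁻¹ := by
        gcongr
        exact (h.antitone hxy.le).trans hx.2

end DoublingBounds

end Quantile

section LogarithmicScale

lemma tendsto_logb_two_natCast : Tendsto (fun N : ℕ => logb 2 N) atTop atTop :=
  (tendsto_logb_atTop one_lt_two).comp tendsto_natCast_atTop_atTop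

lemma tendsto_natCast_rpow_div_logb_rpow {s : ℝ} (hs : 0 < s) (r : ℝ) :
    Tendsto (fun N : ℕ => (N : ℝ) ^ s / logb 2 N ^ r) atTop atTop := by
  refine ((tendsto_exp_mul_div_rpow_atTop r (s * log 2)
    (mul_pos hs (log_pos one_lt_two))).comp tendsto_logb_two_natCast).congr' ?_
  filter_upwards [eventually_gt_atTop 0] with N hN
  rw [Function.comp_apply, mul_assoc, logb, mul_div_cancel₀ _ (log_pos one_lt_two).ne', mul_comm s,
    ← rpow_def_of_pos (Nat.cast_pos.2 hN)]

lemma eventually_natCast_le_two_mul_mul_logb : ∀ᶠ N : ℕ in atTop, (N : ℝ) ≤ 2 * N * logb 2 N := by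
  filter_upwards [tendsto_logb_two_natCast.eventually_ge_atTop 1] with N hN
  nlinarith [N.cast_nonneg (α := ℝ)]

lemma tendsto_two_mul_mul_logb :
    Tendsto (fun N : ℕ => 2 * (N : ℝ) * logb 2 N) atTop atTop :=
  tendsto_atTop_mono' _ eventually_natCast_le_two_mul_mul_logb tendsto_natCast_atTop_atTop

namespace DoublingBounds

variable {Ω : Type*} [MeasurableSpace Ω] {P : Measure Ω} {X : Ω → ℝ} {β₁ β₂ t₀ b : ℝ}

lemma eventually_natCast_rpow_le_cN (h : DoublingBounds (tail P X) β₁ β₂ t₀) (hb : 0 < b)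
    (hbβ₂ : b * β₂ < 1) : ∀ᶠ N : ℕ in atTop, (N : ℝ) ^ b ≤ cN P X N := by
  filter_upwards [eventually_natCast_le_two_mul_mul_logb,
    tendsto_two_mul_mul_logb.eventually (h.eventually_rpow_le_hinv hb hbβ₂)] with N hN hc
  exact (rpow_le_rpow N.cast_nonneg hN hb.le).trans hc

lemma tendsto_cN (h : DoublingBounds (tail P X) β₁ β₂ t₀) : Tendsto (cN P X) atTop atTop :=
  h.tendsto_hinv.comp tendsto_two_mul_mul_logb

lemma eventually_tail_cN_le (h : DoublingBounds (tail P X) β₁ β₂ t₀) :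
    ∀ᶠ N : ℕ in atTop, tail P X (cN P X N) ≤ 2 ^ β₂ * (2 * N * logb 2 N)⁻¹ :=
  tendsto_two_mul_mul_logb.eventually h.eventually_tail_hinv_le

end DoublingBounds

end LogarithmicScale

/-! ### The scale of the increments -/

section IncrementScale

/-- The standing assumptions on the sequences `δ` and `m`: `δ` tends to zero, but more slowly than
any negative power of `N`, and the delay `m N` of the stairs process is `log₂ N + log₂ (δ N)`. -/
structure IsDelayScale (δ : ℕ → ℝ) (m : ℕ → ℕ) : Prop where
  pos : ∀ N, 0 < δ N
  tendsto_zero : Tendsto δ atTop (nhds 0)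
  slow : ∀ e : ℝ, 0 < e → Tendsto (fun N : ℕ => δ N * (N : ℝ) ^ e) atTop atTop
  natCast_eq : ∀ N : ℕ, (m N : ℝ) = logb 2 N + logb 2 (δ N)

/-- The threshold `x₀ = (δ_N / log₂ N) ^ (1 / γ)` beyond which the increments of `theta` have a
power tail. -/
def incrScale (δ : ℕ → ℝ) (γ : ℝ) (N : ℕ) : ℝ :=
  (δ N / logb 2 N) ^ (1 / γ)

namespace IsDelayScale

variable {δ : ℕ → ℝ} {m : ℕ → ℕ} {γ : ℝ}

lemma two_pow_eq (h : IsDelayScale δ m) {N : ℕ} (hN : 0 < N) : (2 : ℝ) ^ m N = N * δ N := by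
  rw [← rpow_natCast, h.natCast_eq, rpow_add two_pos, rpow_logb two_pos (by norm_num) (by simpa),
    rpow_logb two_pos (by norm_num) (h.pos N)]

lemma eventually_pos (h : IsDelayScale δ m) : ∀ᶠ N in atTop, 0 < m N := by
  filter_upwards [(h.slow 1 one_pos).eventually_gt_atTop 1, eventually_gt_atTop 0] with N hN hN0
  rw [rpow_one, mul_comm, ← h.two_pow_eq hN0] at hN
  exact Nat.pos_of_ne_zero fun hm => by simp [hm] at hN

lemma eventually_le_logb (h : IsDelayScale δ m) : ∀ᶠ N : ℕ in atTop, (m N : ℝ) ≤ logb 2 N := by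
  filter_upwards [h.tendsto_zero.eventually_le_const one_pos] with N hN
  rw [h.natCast_eq]
  exact add_le_of_nonpos_right (logb_nonpos one_lt_two (h.pos N).le hN)

lemma eventually_incrScale_pos (h : IsDelayScale δ m) (γ : ℝ) :
    ∀ᶠ N in atTop, 0 < incrScale δ γ N := by
  filter_upwards [tendsto_logb_two_natCast.eventually_gt_atTop 0] with N hN
  exact rpow_pos_of_pos (div_pos (h.pos N) hN) _

lemma tendsto_incrScale (h : IsDelayScale δ m) (hγ : 0 < γ) :
    Tendsto (incrScale δ γ) atTop (nhds 0) := by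
  have hγ' : 0 < 1 / γ := by positivity
  rw [← zero_rpow hγ'.ne']
  exact (h.tendsto_zero.div_atTop tendsto_logb_two_natCast).rpow_const (Or.inr hγ'.le)

lemma tendsto_incrScale_mul_rpow (h : IsDelayScale δ m) (hγ : 0 < γ) {e : ℝ} (he : 0 < e) :
    Tendsto (fun N : ℕ => incrScale δ γ N * (N : ℝ) ^ e) atTop atTop := by
  have hs : 0 < e * γ / 2 := by positivity
  refine ((tendsto_rpow_atTop (one_div_pos.2 hγ)).comp ((h.slow _ hs).atTop_mul_atTop₀
    (tendsto_natCast_rpow_div_logb_rpow hs 1))).congr' ?_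
  filter_upwards [tendsto_logb_two_natCast.eventually_gt_atTop 0, eventually_gt_atTop 0]
    with N hL hN
  have hN : (0 : ℝ) < N := Nat.cast_pos.2 hN
  have hδ := h.pos N
  have split : (N : ℝ) ^ (e * γ / 2) * (N : ℝ) ^ (e * γ / 2) = ((N : ℝ) ^ e) ^ γ := by
    rw [← rpow_add hN, add_halves, rpow_mul hN.le]
  calc (δ N * (N : ℝ) ^ (e * γ / 2) * ((N : ℝ) ^ (e * γ / 2) / logb 2 N ^ (1 : ℝ))) ^ (1 / γ)
      = (δ N / logb 2 N * ((N : ℝ) ^ e) ^ γ) ^ (1 / γ) := by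
        rw [← split, rpow_one]
        ring_nf
    _ = incrScale δ γ N * (N : ℝ) ^ e := by
        rw [mul_rpow (by positivity) (by positivity), one_div, rpow_rpow_inv (by positivity) hγ.ne',
          incrScale, one_div]

end IsDelayScale

namespace DoublingBounds

variable {Ω : Type*} [MeasurableSpace Ω] {P : Measure Ω} {X : Ω → ℝ} {β₁ β₂ t₀ γ : ℝ}
  {δ : ℕ → ℝ} {m : ℕ → ℕ}

lemma tendsto_incrScale_mul_cN_div (h : DoublingBounds (tail P X) β₁ β₂ t₀)
    (hδ : IsDelayScale δ m) (hγ : 0 < γ) :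
    Tendsto (fun N => incrScale δ γ N * cN P X N / (2 * m N)) atTop atTop := by
  have hβ₂ := h.upper_exponent_pos
  obtain ⟨b, hb0, hbβ₂⟩ : ∃ b, 0 < b ∧ b * β₂ < 1 :=
    ⟨1 / (2 * β₂), by positivity, by field_simp; norm_num⟩
  have hb := half_pos hb0
  refine tendsto_atTop_mono' _ ?_ (((hδ.tendsto_incrScale_mul_rpow hγ hb).atTop_mul_atTop₀
    (tendsto_natCast_rpow_div_logb_rpow hb 1)).atTop_div_const two_pos)
  filter_upwards [h.eventually_natCast_rpow_le_cN hb0 hbβ₂, hδ.eventually_le_logb,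
    hδ.eventually_pos, hδ.eventually_incrScale_pos γ, eventually_gt_atTop 0] with N hc hmL hm hx₀ hN
  have : (0 : ℝ) < m N := Nat.cast_pos.2 hm
  have hN : (0 : ℝ) < N := Nat.cast_pos.2 hN
  calc incrScale δ γ N * (N : ℝ) ^ (b / 2) * ((N : ℝ) ^ (b / 2) / logb 2 N ^ (1 : ℝ)) / 2
      = incrScale δ γ N * (N : ℝ) ^ b / (2 * logb 2 N) := by
        rw [← add_halves b, rpow_add hN, rpow_one, add_halves]
        ring
    _ ≤ incrScale δ γ N * cN P X N / (2 * m N) := by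
        have := (rpow_pos_of_pos hN b).trans_le hc
        gcongr

lemma eventually_tail_incrScale_mul_cN_le (h : DoublingBounds (tail P X) β₁ β₂ t₀)
    (hδ : IsDelayScale δ m) (hγ : 0 < γ) :
    ∀ᶠ N : ℕ in atTop, tail P X (incrScale δ γ N * cN P X N) ≤
      4 ^ β₂ * incrScale δ γ N ^ (-β₂) * (2 * N * logb 2 N)⁻¹ := by
  filter_upwards [(h.tendsto_incrScale_mul_cN_div hδ hγ).eventually_ge_atTop t₀,
    hδ.eventually_pos, hδ.eventually_incrScale_pos γ,
    (hδ.tendsto_incrScale hγ).eventually_le_const one_pos, h.eventually_tail_cN_le,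
    h.tendsto_cN.eventually_gt_atTop 0] with N ha hm hx₀ hx₀1 hT hc
  have hm : (1 : ℝ) ≤ m N := Nat.one_le_cast.2 hm
  have potter := h.apply_le_mul (ha.trans (div_le_self (by positivity) (by linarith)))
    ((one_le_inv₀ hx₀).2 hx₀1)
  rw [inv_mul_cancel_left₀ hx₀.ne'] at potter
  calc tail P X (incrScale δ γ N * cN P X N)
      ≤ (2 * (incrScale δ γ N)⁻¹) ^ β₂ * (2 ^ β₂ * (2 * N * logb 2 N)⁻¹) := by
        refine potter.trans ?_
        gcongr
    _ = 4 ^ β₂ * incrScale δ γ N ^ (-β₂) * (2 * N * logb 2 N)⁻¹ := by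
        rw [mul_rpow zero_le_two (by positivity), inv_rpow hx₀.le, ← rpow_neg hx₀.le,
          show (4 : ℝ) = 2 * 2 by norm_num, mul_rpow zero_le_two zero_le_two]
        ring

lemma tendsto_natCast_mul_two_pow_mul_tail_sq (h : DoublingBounds (tail P X) β₁ β₂ t₀)
    (hδ : IsDelayScale δ m) (hγ : 2 * β₂ < γ) :
    Tendsto (fun N => N * 2 ^ m N * (m N * tail P X (incrScale δ γ N * cN P X N) ^ 2))
      atTop (nhds 0) := by
  have hγ0 : 0 < γ := by linarith [h.upper_exponent_pos]
  have hγβ : 0 < γ - 2 * β₂ := sub_pos.2 hγ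
  have bound : Tendsto (fun N => (4 ^ β₂) ^ 2 / 4 * incrScale δ γ N ^ (γ - 2 * β₂))
      atTop (nhds 0) := by
    simpa only [zero_rpow hγβ.ne', mul_zero] using
      ((hδ.tendsto_incrScale hγ0).rpow_const (Or.inr hγβ.le)).const_mul ((4 ^ β₂) ^ 2 / 4)
  refine squeeze_zero' (Eventually.of_forall fun N => by positivity) ?_ bound
  filter_upwards [h.eventually_tail_incrScale_mul_cN_le hδ hγ0, hδ.eventually_le_logb,
    hδ.eventually_incrScale_pos γ, tendsto_logb_two_natCast.eventually_gt_atTop 0,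
    eventually_gt_atTop 0] with N hT hmL hx₀ hL hN
  have hδN := hδ.pos N
  have hx₀γ : incrScale δ γ N ^ γ = δ N / logb 2 N := by
    rw [incrScale, one_div, rpow_inv_rpow (by positivity) hγ0.ne']
  have hx₀sub : incrScale δ γ N ^ (γ - 2 * β₂) =
      δ N / logb 2 N * (incrScale δ γ N ^ (-β₂)) ^ 2 := by
    rw [← hx₀γ, ← rpow_mul_natCast hx₀.le, ← rpow_add hx₀]
    congr 1
    push_cast
    ring
  rw [hδ.two_pow_eq hN]
  calc N * (N * δ N) * (m N * tail P X (incrScale δ γ N * cN P X N) ^ 2)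
      ≤ N * (N * δ N) * (logb 2 N *
          (4 ^ β₂ * incrScale δ γ N ^ (-β₂) * (2 * N * logb 2 N)⁻¹) ^ 2) := by
        gcongr
        exact (h.pos _).le
    _ = (4 ^ β₂) ^ 2 / 4 * incrScale δ γ N ^ (γ - 2 * β₂) := by
        rw [hx₀sub]
        field_simp
        norm_num

lemma tendsto_delay_rpow_mul_tail (h : DoublingBounds (tail P X) β₁ β₂ t₀)
    (hδ : IsDelayScale δ m) (hγ : 0 < γ) :
    Tendsto (fun N => (m N : ℝ) ^ (1 + 2 * β₂) * tail P X (incrScale δ γ N * cN P X N))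
      atTop (nhds 0) := by
  have hβ₂ := h.upper_exponent_pos
  have bound := (((tendsto_rpow_atTop hβ₂).comp (hδ.tendsto_incrScale_mul_rpow hγ
    (by positivity : 0 < 1 / (2 * β₂)))).atTop_mul_atTop₀
    (tendsto_natCast_rpow_div_logb_rpow one_half_pos (2 * β₂))).inv_tendsto_atTop.const_mul
    (4 ^ β₂ / 2)
  rw [mul_zero] at bound
  refine squeeze_zero' (Eventually.of_forall fun N => mul_nonneg (by positivity) (h.pos _).le) ?_
    bound
  filter_upwards [h.eventually_tail_incrScale_mul_cN_le hδ hγ, hδ.eventually_le_logb,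
    hδ.eventually_incrScale_pos γ, tendsto_logb_two_natCast.eventually_gt_atTop 0,
    eventually_gt_atTop 0] with N hT hmL hx₀ hL hN
  have hN : (0 : ℝ) < N := Nat.cast_pos.2 hN
  have hsqrt : ((N : ℝ) ^ (1 / (2 * β₂))) ^ β₂ = (N : ℝ) ^ (1 / 2 : ℝ) := by
    rw [← rpow_mul hN.le]
    congr 1
    field_simp
  have hself : (N : ℝ) ^ (1 / 2 : ℝ) * (N : ℝ) ^ (1 / 2 : ℝ) = N := by
    rw [← rpow_add hN, add_halves, rpow_one]
  calc (m N : ℝ) ^ (1 + 2 * β₂) * tail P X (incrScale δ γ N * cN P X N)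
      ≤ logb 2 N ^ (1 + 2 * β₂) *
          (4 ^ β₂ * incrScale δ γ N ^ (-β₂) * (2 * N * logb 2 N)⁻¹) := by
        gcongr
        exact (h.pos _).le
    _ = 4 ^ β₂ / 2 * ((incrScale δ γ N * (N : ℝ) ^ (1 / (2 * β₂))) ^ β₂ *
          ((N : ℝ) ^ (1 / 2 : ℝ) / logb 2 N ^ (2 * β₂)))⁻¹ := by
        rw [mul_rpow hx₀.le (by positivity), hsqrt, rpow_add hL, rpow_one, rpow_neg hx₀.le,
          ← mul_div_assoc, mul_assoc _ ((N : ℝ) ^ _), hself]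
        field_simp

lemma mul_apply_half_add_sq_le {T : ℝ → ℝ} (h : DoublingBounds T β₁ β₂ t₀) {m : ℕ} (hm : 0 < m)
    {x : ℝ} (hx : t₀ ≤ x / (2 * m)) (hTx : (m : ℝ) ^ (1 + 2 * β₂) * T x ≤ 1) :
    m * T (x / 2) + (m * T (x / (2 * m))) ^ 2 ≤ 2 * (4 ^ β₂) ^ 2 * (m * T x) := by
  have hm1 : (1 : ℝ) ≤ m := Nat.one_le_cast.2 hm
  have hx0 : 0 < x := (div_pos_iff_of_pos_right (by positivity)).1 (h.threshold_pos.trans_le hx)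
  have hTx0 := h.pos x
  have le_of_one_le {l : ℝ} (hl1 : 1 ≤ l) (hlm : l ≤ m) :
      T (x / (2 * l)) ≤ 4 ^ β₂ * l ^ β₂ * T x := by
    have hge : t₀ ≤ x / (2 * l) := hx.trans (by gcongr)
    have potter := h.apply_le_mul hge (by linarith : 1 ≤ 2 * l)
    rwa [mul_div_cancel₀ _ (by positivity), ← mul_assoc, mul_rpow (by norm_num) (by positivity),
      show (2 : ℝ) * 2 = 4 by norm_num] at potter
  have one_jump : T (x / 2) ≤ 4 ^ β₂ * T x := by
    simpa only [mul_one, one_rpow] using le_of_one_le le_rfl hm1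
  have one_le : 1 ≤ (4 : ℝ) ^ β₂ := one_le_rpow (by norm_num) h.upper_exponent_pos.le
  have two_jumps : (m * T (x / (2 * m))) ^ 2 ≤ (4 ^ β₂) ^ 2 * (m * T x) := by
    calc (m * T (x / (2 * m))) ^ 2 ≤ (m * (4 ^ β₂ * m ^ β₂ * T x)) ^ 2 := by
          have := h.pos (x / (2 * m))
          gcongr
          exact le_of_one_le hm1 le_rfl
      _ = (4 ^ β₂) ^ 2 * (m * T x) * (m ^ (1 + 2 * β₂) * T x) := by
          rw [rpow_add (by positivity), rpow_one, mul_comm 2 β₂, rpow_mul (by positivity), rpow_two]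
          ring
      _ ≤ (4 ^ β₂) ^ 2 * (m * T x) := mul_le_of_le_one_right (by positivity) hTx
  calc m * T (x / 2) + (m * T (x / (2 * m))) ^ 2
      ≤ m * ((4 ^ β₂) ^ 2 * T x) + (4 ^ β₂) ^ 2 * (m * T x) := by
        gcongr
        exact one_jump.trans (by gcongr; exact le_self_pow₀ one_le two_ne_zero)
    _ = 2 * (4 ^ β₂) ^ 2 * (m * T x) := by ring

lemma incrTailBound_mul_le {T : ℝ → ℝ} (h : DoublingBounds T β₁ β₂ t₀) (N : ℕ) {m : ℕ}
    (hm : 0 < m) {a u : ℝ} (ha : t₀ ≤ a / (2 * m)) (hTa : (m : ℝ) ^ (1 + 2 * β₂) * T a ≤ 1)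
    (hu : 1 ≤ u) :
    incrTailBound N m T (u * a) ≤
      4 * (4 ^ β₂) ^ 2 * (2 ^ β₁) ^ 2 * (N * 2 ^ m * (m * T a ^ 2)) * u ^ (-(2 * β₁)) := by
  have hm1 : (1 : ℝ) ≤ m := Nat.one_le_cast.2 hm
  have ha0 : 0 < a := (div_pos_iff_of_pos_right (by positivity)).1 (h.threshold_pos.trans_le ha)
  have hau : a ≤ u * a := le_mul_of_one_le_left ha0.le hu
  have hTu : 0 < T (u * a) := h.pos _
  have hTua : (m : ℝ) ^ (1 + 2 * β₂) * T (u * a) ≤ 1 :=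
    (mul_le_mul_of_nonneg_left (h.antitone hau) (by positivity)).trans hTa
  have decay : T (u * a) ≤ 2 ^ β₁ * u ^ (-β₁) * T a := by
    have potter := h.apply_mul_le (ha.trans (div_le_self ha0.le (by linarith))) hu
    rwa [div_rpow (by positivity) zero_le_two, rpow_neg zero_le_two, div_inv_eq_mul,
      mul_comm (u ^ _)] at potter
  calc incrTailBound N m T (u * a)
      ≤ 2 * (N * 2 ^ m) * (2 * (4 ^ β₂) ^ 2 * (m * T (u * a))) * T (u * a) := by
        rw [incrTailBound]
        gcongr
        exact h.mul_apply_half_add_sq_le hm (ha.trans (by gcongr)) hTua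
    _ = 4 * (4 ^ β₂) ^ 2 * (N * 2 ^ m * (m * T (u * a) ^ 2)) := by ring
    _ ≤ 4 * (4 ^ β₂) ^ 2 * (N * 2 ^ m * (m * (2 ^ β₁ * u ^ (-β₁) * T a) ^ 2)) := by gcongr
    _ = 4 * (4 ^ β₂) ^ 2 * (2 ^ β₁) ^ 2 * (N * 2 ^ m * (m * T a ^ 2)) * u ^ (-(2 * β₁)) := by
        rw [mul_comm 2 β₁, ← neg_mul, rpow_mul (by positivity), rpow_two]
        ring

lemma eventually_incrTailBound_le (h : DoublingBounds (tail P X) β₁ β₂ t₀)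
    (hδ : IsDelayScale δ m) (hγ : 2 * β₂ < γ) :
    ∀ᶠ N in atTop, ∀ x, incrScale δ γ N ≤ x →
      incrTailBound N (m N) (fun y => tail P X (y * cN P X N)) x ≤
        (x / incrScale δ γ N) ^ (-(2 * β₁)) := by
  have hγ0 : 0 < γ := by linarith [h.upper_exponent_pos]
  have prefactor := (h.tendsto_natCast_mul_two_pow_mul_tail_sq hδ hγ).const_mul
    (4 * (4 ^ β₂) ^ 2 * (2 ^ β₁) ^ 2)
  rw [mul_zero] at prefactor
  filter_upwards [prefactor.eventually_le_const one_pos,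
    (h.tendsto_delay_rpow_mul_tail hδ hγ0).eventually_le_const one_pos,
    (h.tendsto_incrScale_mul_cN_div hδ hγ0).eventually_ge_atTop t₀,
    hδ.eventually_pos, hδ.eventually_incrScale_pos γ] with N hN hTa ha hm hx₀ x hx
  have rescale : incrTailBound N (m N) (fun y => tail P X (y * cN P X N)) x =
      incrTailBound N (m N) (tail P X) (x / incrScale δ γ N * (incrScale δ γ N * cN P X N)) := by
    rw [← mul_assoc, div_mul_cancel₀ _ hx₀.ne']
    simp only [incrTailBound, div_mul_eq_mul_div]
  have hu : 1 ≤ x / incrScale δ γ N := (one_le_div hx₀).2 hx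
  rw [rescale]
  exact (h.incrTailBound_mul_le N hm ha hTa hu).trans
    (mul_le_of_le_one_left (by positivity) hN)

end DoublingBounds

end IncrementScale

lemma isIIDJumps_div_const {Ω : Type*} [MeasurableSpace Ω] {P : Measure Ω} {X : Ω → ℝ}
    (hX : Measurable X) {N : ℕ} {ξ : ℕ → Fin N → Fin 2 → Ω → ℝ}
    (hξmeas : ∀ n i j, Measurable (ξ n i j))
    (hξdist : ∀ n i j, P.map (ξ n i j) = P.map X)
    (hξindep : iIndepFun (fun q : ℕ × Fin N × Fin 2 => ξ q.1 q.2.1 q.2.2) P) (c : ℝ) :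
    IsIIDJumps P (fun ω n i j => ξ n i j ω / c) (P.map fun ω => X ω / c) where
  measurable n i j := (hξmeas n i j).div_const c
  iIndepFun := hξindep.comp (fun _ y => y / c) fun _ => measurable_id.div_const c
  map_eq n i j := by
    have hdiv : Measurable fun y : ℝ => y / c := measurable_id.div_const c
    calc P.map (fun ω => ξ n i j ω / c) = (P.map (ξ n i j)).map (· / c) :=
          (Measure.map_map hdiv (hξmeas n i j)).symm
      _ = (P.map X).map (· / c) := by rw [hξdist]
      _ = P.map (fun ω => X ω / c) := Measure.map_map hdiv hX

lemma map_div_const_real_Ioi {Ω : Type*} [MeasurableSpace Ω] {P : Measure Ω} {X : Ω → ℝ}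
    (hX : Measurable X) {c : ℝ} (hc : 0 < c) (y : ℝ) :
    (P.map fun ω => X ω / c).real (Ioi y) = tail P X (y * c) := by
  rw [map_measureReal_apply (hX.div_const c) measurableSet_Ioi]
  simp only [tail, preimage, mem_Ioi, lt_div_iff₀ hc]
  rfl

theorem stmt_3_general {Ω : Type*} [MeasurableSpace Ω] (P : Measure Ω) [IsProbabilityMeasure P]
    (X : Ω → ℝ) (hX : Measurable X) (α : ℝ)
    (hdouble : Tendsto (fun x => tail P X x / tail P X (2 * x)) atTop (nhds (2 ^ α)))
    (ξ : (N : ℕ) → ℕ → Fin N → Fin 2 → Ω → ℝ)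
    (hξmeas : ∀ N n i j, Measurable (ξ N n i j))
    (hξdist : ∀ N n i j, P.map (ξ N n i j) = P.map X)
    (hξindep : ∀ N, iIndepFun (fun q : ℕ × Fin N × Fin 2 => ξ N q.1 q.2.1 q.2.2) P)
    (δ : ℕ → ℝ) (mN : ℕ → ℕ) (hδ : IsDelayScale δ mN)
    (p q ε : ℝ) (hp0 : 0 < p) (hp1 : p ≤ 1) (hpq : p < q) (hq : q < 2 * α) (hε : 0 < ε) :
    ∃ N₀ : ℕ, ∀ N : ℕ, N₀ ≤ N → ∀ n : ℕ,
      (∫ ω, (theta N (mN N) (fun k i j => ξ N k i j ω / cN P X N) n) ^ p ∂P) ≤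
        (1 + p / (q - p)) * n * (δ N / logb 2 N) ^ (p / (2 * α + ε)) ∧
      (∫ ω, (max (brwMax N (fun k i j => ξ N k i j ω / cN P X N) n -
            dsp N (mN N) (fun k i j => ξ N k i j ω / cN P X N) n) 0) ^ p ∂P) ≤
        (1 + p / (q - p)) * n * (δ N / logb 2 N) ^ (p / (2 * α + ε)) := by
  obtain ⟨t₀, hT⟩ := exists_doublingBounds (antitone_tail (P := P) (X := X))
    (fun _ => measureReal_nonneg) (by linarith : 0 < q / 2) (by linarith : q / 2 < α)
    (by linarith : α < α + ε / 4) hdouble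
  refine eventually_atTop.1 ?_
  filter_upwards [hT.eventually_incrTailBound_le hδ (by linarith : 2 * (α + ε / 4) < 2 * α + ε),
    hδ.eventually_pos, hδ.eventually_incrScale_pos (2 * α + ε), hT.tendsto_cN.eventually_gt_atTop 0,
    tendsto_logb_two_natCast.eventually_gt_atTop 0, eventually_ne_atTop 0]
    with N hbound hm hx₀ hc hL hN n
  have : NeZero N := ⟨hN⟩
  simp only [← map_div_const_real_Ioi hX hc, mul_div_cancel₀ q two_ne_zero] at hbound
  obtain ⟨hint, hmoment⟩ := (isIIDJumps_div_const hX (hξmeas N) (hξdist N) (hξindep N)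
    (cN P X N)).integral_rpow_theta_le hm hp0 hp1 hpq hx₀ hbound n
  have hx₀p : incrScale δ (2 * α + ε) N ^ p = (δ N / logb 2 N) ^ (p / (2 * α + ε)) := by
    rw [incrScale, ← rpow_mul (div_pos (hδ.pos N) hL).le, one_div_mul_eq_div]
  rw [hx₀p] at hmoment
  exact ⟨hmoment, (integral_rpow_posPart_le_integral_rpow_theta hp0 hint).trans hmoment⟩

/-- let `p ∈ (0,1]` with `p < 2α`. For every `0 < ε ≤ (2α−p)/2` there is `N₀`
such that for all `N ≥ N₀` and all `n ≥ 0`,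
`E[θ_n^p] ≤ (1 + 4p/(2α−p)) n (δ_N/log₂ N)^{p/(2α+ε)}`, and the same bound holds for
`E[((𝒴_N(n) − R^{N,m_N}(n))₊)^p]`. -/
theorem stmt_3 {Ω : Type*} [MeasurableSpace Ω] (P : Measure Ω) [IsProbabilityMeasure P]
    (X : Ω → ℝ) (hXmeas : Measurable X) (hXpos : ∀ ω, 0 ≤ X ω)
    (α : ℝ) (hα : 0 < α)
    (hRV : ∀ l : ℝ, 0 < l →
      Tendsto (fun x => tail P X x / tail P X (l * x)) atTop (nhds (l ^ α)))
    (ξ : (N : ℕ) → ℕ → Fin N → Fin 2 → Ω → ℝ)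
    (hξmeas : ∀ N n i j, Measurable (ξ N n i j))
    (hξpos : ∀ N n i j ω, 0 ≤ ξ N n i j ω)
    (hξdist : ∀ N n i j, Measure.map (ξ N n i j) P = Measure.map X P)
    (hξindep : ∀ N, iIndepFun
      (fun p : ℕ × Fin N × Fin 2 => ξ N p.1 p.2.1 p.2.2) P)
    (δ : ℕ → ℝ) (hδpos : ∀ N, 0 < δ N) (hδ0 : Tendsto δ atTop (nhds 0))
    (hδslow : ∀ e : ℝ, 0 < e → Tendsto (fun N : ℕ => δ N * (N : ℝ) ^ e) atTop atTop)
    (mN : ℕ → ℕ) (hmN1 : ∀ N, 1 ≤ mN N)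
    (hmN : ∀ N : ℕ, (mN N : ℝ) = Real.logb 2 N + Real.logb 2 (δ N))
    (p : ℝ) (hp0 : 0 < p) (hp1 : p ≤ 1) (hp : p < 2 * α)
    (ε : ℝ) (hε0 : 0 < ε) (hε : ε ≤ (2 * α - p) / 2) :
    ∃ N₀ : ℕ, ∀ N : ℕ, N₀ ≤ N → ∀ n : ℕ,
      (∫ ω, (theta N (mN N) (fun k i j => ξ N k i j ω / cN P X N) n) ^ p ∂P) ≤
        (1 + 4 * p / (2 * α - p)) * n * (δ N / Real.logb 2 N) ^ (p / (2 * α + ε)) ∧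
      (∫ ω, (max (brwMax N (fun k i j => ξ N k i j ω / cN P X N) n -
            dsp N (mN N) (fun k i j => ξ N k i j ω / cN P X N) n) 0) ^ p ∂P) ≤
        (1 + 4 * p / (2 * α - p)) * n * (δ N / Real.logb 2 N) ^ (p / (2 * α + ε)) := by
  simpa only [add_sub_cancel_left, div_div_eq_mul_div, mul_comm p 4] using
    stmt_3_general P X hXmeas α (hRV 2 two_pos) ξ hξmeas hξdist hξindep δ mN
      ⟨hδpos, hδ0, hδslow, hmN⟩ p (p + (2 * α - p) / 4) ε hp0 hp1 (by linarith) (by linarith) hε0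

end
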